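/- Suppose g, h ∈ G(F,F') are hyperbolic, translation compatible, and weakly asymptotic (λ_g(v) = λ_h(v) for all vertices v). Then h and hg are weakly asymptotic, i.e., λ_{hg}(v) = λ_h(v) for all v ∈ V(T). -/

import Mathlib

/-!
Through the cocycle `σ`, the function `λ_t` is equivariant under `t`. Hence the common value `Λ` of
`λ_g` and `λ_h` is equivariant under `h g`, and it equals `λ_{hg}` as soon as, for every vertex `v`,
the coset `Λ ((h g)⁻ⁿ v)` is trivial for large `n`.

Translation compatible hyperbolic `g` and `h` admit a half-tree `H` which both `g` and `h g` map
strictly into itself. If the axes share an edge, that edge bounds such an `H`. Otherwise each axis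
lies between two consecutive edges of the other axis, and `H` is found by ping-pong.

`Λ = λ_g` can be nontrivial only on the forward `g`-orbits of the finitely many singularities of
`g`. These orbits enter `H` and stay there, so `Λ` is nontrivial at only finitely many vertices
outside `H`. The backward orbits of `h g` eventually avoid `H` and every finite set, hence `Λ` is
eventually trivial along them.
-/

/-- `p : ℤ → V` is a translation axis for `g` with translation length `l ≥ 1`. -/
def IsTransAxis {V : Type*} (T : SimpleGraph V) (g : Equiv.Perm V) (p : ℤ → V) (l : ℕ) :
    Prop :=
  Function.Injective p ∧ (∀ i : ℤ, T.Adj (p i) (p (i + 1))) ∧ 1 ≤ l ∧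
    ∀ i : ℤ, g (p i) = p (i + l)

/-- Two parametrized axes are translation compatible. -/
def TransCompat {V : Type*} (p q : ℤ → V) : Prop :=
  ∀ i j i' j' : ℤ, p i = q i' → p j = q j' → (i ≤ j ↔ i' ≤ j')

open Filter Pointwise

section Cocycle

variable {G X K : Type*} [Group G] [MulAction G X] [Group K]

/-- `σ` is a cocycle over the action of `G` on `X`: the chain rule satisfied by the local actions
`σ(g, v)` of automorphisms of a coloured tree. -/
def IsCocycle (σ : G → X → K) : Prop :=
  ∀ s t x, σ (s * t) x = σ s (t • x) * σ t x

/-- `Λ x` is the asymptotic coset `λ_t(x)`, the eventual value of `σ(tⁿ, t⁻ⁿ x) F`. Being an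
asymptotic coset is a relation rather than a function since the limit need not exist. -/
def IsAsymptoticCoset (σ : G → X → K) (F : Subgroup K) (t : G) (Λ : X → K ⧸ F) : Prop :=
  ∀ x, ∀ᶠ n in atTop, (σ (t ^ n) (t⁻¹ ^ n • x) : K ⧸ F) = Λ x

/-- `t` skewers `H`: it maps `H` into itself, and every orbit of `t` comes from outside `H` and ends
up in `H`. This is the notion for half-spaces `H` from the theory of cube complexes. -/
structure Skewers (t : G) (H : Set X) : Prop where
  smul_subset : t • H ⊆ H
  exists_pow_smul_mem (x : X) : ∃ n : ℕ, t ^ n • x ∈ H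
  exists_inv_pow_smul_notMem (x : X) : ∃ n : ℕ, t⁻¹ ^ n • x ∉ H

variable {σ : G → X → K} {F : Subgroup K} {g h t : G} {Λ Λ' : X → K ⧸ F} {H : Set X}

theorem smul_compl_subset_compl_iff : t⁻¹ • Hᶜ ⊆ Hᶜ ↔ t • H ⊆ H := by
  rw [Set.smul_set_compl, Set.compl_subset_compl, Set.subset_smul_set_iff, inv_inv]

theorem smul_compl_ssubset_compl_iff : t⁻¹ • Hᶜ ⊂ Hᶜ ↔ t • H ⊂ H := by
  rw [Set.ssubset_def, Set.ssubset_def, smul_compl_subset_compl_iff, Set.smul_set_compl,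
    Set.compl_subset_compl, Set.smul_set_subset_iff_subset_inv_smul_set (a := t⁻¹), inv_inv]

namespace Skewers

theorem compl (hH : Skewers t H) : Skewers t⁻¹ Hᶜ where
  smul_subset := smul_compl_subset_compl_iff.2 hH.smul_subset
  exists_pow_smul_mem := hH.exists_inv_pow_smul_notMem
  exists_inv_pow_smul_notMem x := by simpa using hH.exists_pow_smul_mem x

theorem eventually_pow_smul_mem (hH : Skewers t H) (x : X) : ∀ᶠ n : ℕ in atTop, t ^ n • x ∈ H := by
  obtain ⟨m, hm⟩ := hH.exists_pow_smul_mem x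
  refine eventually_atTop.2 ⟨m, fun n hmn => ?_⟩
  induction n, hmn using Nat.le_induction with
  | base => exact hm
  | succ n _ ih =>
    rw [pow_succ', mul_smul]
    exact hH.smul_subset (Set.smul_mem_smul_set ih)

theorem eventually_inv_pow_smul_notMem (hH : Skewers t H) (x : X) :
    ∀ᶠ n : ℕ in atTop, t⁻¹ ^ n • x ∉ H :=
  hH.compl.eventually_pow_smul_mem x

theorem eventually_inv_pow_smul_notMem_of_finite (hH : Skewers t H) {B : Set X} (hB : B.Finite)
    (x : X) : ∀ᶠ n : ℕ in atTop, t⁻¹ ^ n • x ∉ B := by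
  obtain ⟨m, hm⟩ : ∃ m : ℕ, ∀ y ∈ B, t ^ m • y ∈ H :=
    ((eventually_all_finite hB).2 fun y _ => hH.eventually_pow_smul_mem y).exists
  obtain ⟨N, hN⟩ := eventually_atTop.1 (hH.eventually_inv_pow_smul_notMem x)
  refine eventually_atTop.2 ⟨N + m, fun n hn hmem => hN (n - m) (by lia) ?_⟩
  have hsplit : t⁻¹ ^ n = t⁻¹ ^ m * t⁻¹ ^ (n - m) := by
    rw [← pow_add, Nat.add_sub_cancel' (by lia)]
  simpa [hsplit, mul_smul] using hm _ hmem

end Skewers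

theorem IsAsymptoticCoset.unique (hΛ : IsAsymptoticCoset σ F t Λ)
    (hΛ' : IsAsymptoticCoset σ F t Λ') : Λ = Λ' := by
  ext x
  obtain ⟨n, hn, hn'⟩ := ((hΛ x).and (hΛ' x)).exists
  exact hn.symm.trans hn'

namespace IsCocycle

theorem one_apply (hσ : IsCocycle σ) (x : X) : σ 1 x = 1 := by
  simpa using hσ 1 1 x

/-- The elements with respect to which `Λ` is equivariant, where `G` acts on `X × K ⧸ F` through
the cocycle `σ`. -/
def equivariantSubmonoid (hσ : IsCocycle σ) (Λ : X → K ⧸ F) : Submonoid G where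
  carrier := {s | ∀ x, Λ (s • x) = σ s x • Λ x}
  one_mem' x := by rw [hσ.one_apply, one_smul, one_smul]
  mul_mem' {s t} hs ht x := by rw [mul_smul, hs, ht, hσ, mul_smul]

theorem mem_equivariantSubmonoid_of_isAsymptoticCoset (hσ : IsCocycle σ)
    (hΛ : IsAsymptoticCoset σ F t Λ) : t ∈ hσ.equivariantSubmonoid Λ := by
  intro x
  obtain ⟨n, hn, hn'⟩ :=
    ((hΛ x).and ((tendsto_add_atTop_nat 1).eventually (hΛ (t • x)))).exists
  rw [← hn, ← hn', pow_succ t⁻¹, mul_smul, inv_smul_smul, pow_succ' t, hσ, smul_smul, inv_pow,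
    mul_inv_cancel, one_smul]
  rfl

theorem isAsymptoticCoset_of_eventually_eq_one (hσ : IsCocycle σ)
    (ht : t ∈ hσ.equivariantSubmonoid Λ)
    (hΛ : ∀ x, ∀ᶠ n : ℕ in atTop, Λ (t⁻¹ ^ n • x) = (1 : K)) : IsAsymptoticCoset σ F t Λ := by
  intro x
  filter_upwards [hΛ x] with n hn
  have hequiv := pow_mem ht n (t⁻¹ ^ n • x)
  rw [hn, inv_pow, smul_inv_smul] at hequiv
  rw [hequiv, inv_pow, MulAction.Quotient.smul_coe, smul_eq_mul, mul_one]

theorem apply_pow_mem (hσ : IsCocycle σ) {x : X} (n : ℕ)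
    (hx : ∀ k < n, σ t (t ^ k • x) ∈ F) : σ (t ^ n) x ∈ F := by
  induction n with
  | zero => rw [pow_zero, hσ.one_apply]; exact F.one_mem
  | succ n ih =>
    rw [pow_succ', hσ]
    exact F.mul_mem (hx n n.lt_succ_self) (ih fun k hk => hx k (hk.trans n.lt_succ_self))

theorem exists_inv_pow_smul_notMem_of_ne_one (hσ : IsCocycle σ) (hΛ : IsAsymptoticCoset σ F t Λ)
    {x : X} (hx : Λ x ≠ (1 : K)) : ∃ n : ℕ, σ t (t⁻¹ ^ n • x) ∉ F := by
  by_contra! hmem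
  obtain ⟨n, hn⟩ := (hΛ x).exists
  have hσn : σ (t ^ n) (t⁻¹ ^ n • x) ∈ F := by
    refine hσ.apply_pow_mem n fun k hk => ?_
    have hsplit : t⁻¹ ^ n = t⁻¹ ^ k * t⁻¹ ^ (n - k) := by
      rw [← pow_add, Nat.add_sub_cancel' hk.le]
    simpa [hsplit, mul_smul] using hmem (n - k)
  exact hx (hn.symm.trans (QuotientGroup.eq.2 (by simpa using hσn)))

theorem finite_setOf_ne_one_diff (hσ : IsCocycle σ) (hΛ : IsAsymptoticCoset σ F t Λ)
    (hfin : {x | σ t x ∉ F}.Finite) (hH : Skewers t H) : ({x | Λ x ≠ (1 : K)} \ H).Finite := by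
  obtain ⟨M, hM⟩ := eventually_atTop.1
    ((eventually_all_finite hfin).2 fun y _ => hH.eventually_pow_smul_mem y)
  refine (Set.Finite.biUnion (Set.finite_lt_nat M) fun k _ => hfin.smul_set (a := t ^ k)).subset ?_
  rintro x ⟨hx, hxH⟩
  obtain ⟨k, hk⟩ := hσ.exists_inv_pow_smul_notMem_of_ne_one hΛ hx
  have hkM : k < M := by
    by_contra! hle
    exact hxH (by simpa using hM k hle _ hk)
  exact Set.mem_biUnion hkM (Set.mem_smul_set_iff_inv_smul_mem.2 (by simpa using hk))

theorem isAsymptoticCoset_mul_of_skewers (hσ : IsCocycle σ) (hfin : {x | σ g x ∉ F}.Finite)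
    (hgH : Skewers g H) (hhgH : Skewers (h * g) H)
    (hΛg : IsAsymptoticCoset σ F g Λ) (hΛh : IsAsymptoticCoset σ F h Λ) :
    IsAsymptoticCoset σ F (h * g) Λ := by
  refine hσ.isAsymptoticCoset_of_eventually_eq_one
    (mul_mem (hσ.mem_equivariantSubmonoid_of_isAsymptoticCoset hΛh)
      (hσ.mem_equivariantSubmonoid_of_isAsymptoticCoset hΛg)) fun x => ?_
  filter_upwards [hhgH.eventually_inv_pow_smul_notMem x,
    hhgH.eventually_inv_pow_smul_notMem_of_finite (hσ.finite_setOf_ne_one_diff hΛg hfin hgH) x]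
    with n hnH hnB
  by_contra hne
  exact hnB ⟨hne, hnH⟩

end IsCocycle

end Cocycle

section HalfTree

variable {V : Type*} {T : SimpleGraph V} {a b a' b' : V}

/-- The side of the edge `a b` containing `b`. It is meant for edges of trees, where removing the
edge separates `a` from `b`. -/
def halfTree (T : SimpleGraph V) (a b : V) : Set V :=
  {v | (T.deleteEdges {s(a, b)}).Reachable v b}

theorem right_mem_halfTree : b ∈ halfTree T a b :=
  SimpleGraph.Reachable.refl b

theorem left_notMem_halfTree (hT : T.IsAcyclic) (hab : T.Adj a b) : a ∉ halfTree T a b :=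
  SimpleGraph.isBridge_iff.1 (SimpleGraph.isAcyclic_iff_forall_adj_isBridge.1 hT hab)

theorem eq_of_adj_of_mem_of_notMem_halfTree (hT : T.IsAcyclic) (hab : T.Adj a b) {u v : V}
    (huv : T.Adj u v) (hu : u ∈ halfTree T a b) (hv : v ∉ halfTree T a b) : u = b ∧ v = a := by
  have hedge : s(v, u) = s(a, b) := by
    by_contra hne
    have hvu : (T.deleteEdges {s(a, b)}).Adj v u := T.deleteEdges_adj.2 ⟨huv.symm, hne⟩
    exact hv (hvu.reachable.trans hu)
  rcases Sym2.eq_iff.1 hedge with ⟨hva, hub⟩ | ⟨-, hua⟩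
  · exact ⟨hub, hva⟩
  · exact absurd (hua ▸ hu) (left_notMem_halfTree hT hab)

theorem halfTree_subset_halfTree (hT : T.IsTree) (hab : T.Adj a b) (hab' : T.Adj a' b')
    (ha : a ∉ halfTree T a' b') (hb' : b' ∈ halfTree T a b) :
    halfTree T a' b' ⊆ halfTree T a b := by
  intro v hv
  by_contra hvH
  obtain ⟨w⟩ := hT.connected v b'
  obtain ⟨d, -, ⟨hfst, hfst'⟩, hsnd⟩ :=
    w.exists_boundary_dart (halfTree T a' b' \ halfTree T a b) ⟨hv, hvH⟩ fun h => h.2 hb'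
  by_cases hmem : d.snd ∈ halfTree T a' b'
  · have hsnd' : d.snd ∈ halfTree T a b := by_contra fun h => hsnd ⟨hmem, h⟩
    have hcross := eq_of_adj_of_mem_of_notMem_halfTree hT.isAcyclic hab d.adj.symm hsnd' hfst'
    exact ha (hcross.2 ▸ hfst)
  · have hcross := eq_of_adj_of_mem_of_notMem_halfTree hT.isAcyclic hab' d.adj hfst hmem
    exact hfst' (hcross.1 ▸ hb')

theorem halfTree_compl (hT : T.IsTree) (hab : T.Adj a b) :
    (halfTree T a b)ᶜ = halfTree T b a := by
  refine subset_antisymm (fun v hv => ?_) fun v hva hvb => ?_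
  · by_contra hvH
    obtain ⟨w⟩ := hT.connected v a
    obtain ⟨d, -, hfst, hsnd⟩ := w.exists_boundary_dart (halfTree T a b ∪ halfTree T b a)ᶜ
      (not_or.2 ⟨hv, hvH⟩) fun ha => ha (.inr right_mem_halfTree)
    rcases not_not.1 hsnd with hmem | hmem
    · have hcross := eq_of_adj_of_mem_of_notMem_halfTree hT.isAcyclic hab d.adj.symm hmem
        fun h => hfst (.inl h)
      exact hfst (.inr (hcross.2 ▸ right_mem_halfTree))
    · have hcross := eq_of_adj_of_mem_of_notMem_halfTree hT.isAcyclic hab.symm d.adj.symm hmem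
        fun h => hfst (.inr h)
      exact hfst (.inl (hcross.2 ▸ right_mem_halfTree))
  · rw [halfTree, Sym2.eq_swap] at hva
    exact left_notMem_halfTree hT.isAcyclic hab
      ((SimpleGraph.Reachable.symm hva).trans hvb)

theorem right_notMem_of_halfTree_ssubset (hT : T.IsAcyclic) (hab : T.Adj a b) (hab' : T.Adj a' b')
    (hss : halfTree T a' b' ⊂ halfTree T a b) : b ∉ halfTree T a' b' := by
  intro hb
  obtain ⟨rfl, rfl⟩ := eq_of_adj_of_mem_of_notMem_halfTree hT hab' hab.symm hb
    fun ha => left_notMem_halfTree hT hab (hss.subset ha)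
  exact hss.ne rfl

theorem dist_right_lt_of_mem_of_notMem_halfTree (hT : T.IsTree) (hab : T.Adj a b) {x y : V}
    (hx : x ∈ halfTree T a b) (hy : y ∉ halfTree T a b) : T.dist x b < T.dist x y := by
  classical
  obtain ⟨w, hw⟩ := hT.connected.exists_walk_length_eq_dist x y
  obtain ⟨d, hd, hfst, hsnd⟩ := w.exists_boundary_dart _ hx hy
  have hb : b ∈ w.support := by
    rw [← (eq_of_adj_of_mem_of_notMem_halfTree hT.isAcyclic hab d.adj hfst hsnd).1]
    exact w.dart_fst_mem_support_of_mem_darts hd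
  have hby : b ≠ y := fun h => hy (h ▸ right_mem_halfTree)
  calc T.dist x b ≤ (w.takeUntil b hb).length := SimpleGraph.dist_le _
    _ < w.length := w.length_takeUntil_lt_length hb hby
    _ = T.dist x y := hw

theorem exists_notMem_of_strictAnti_halfTree (hT : T.IsTree) {a b : ℕ → V}
    (hab : ∀ n, T.Adj (a n) (b n)) (hanti : StrictAnti fun n => halfTree T (a n) (b n)) (x : V) :
    ∃ n, x ∉ halfTree T (a n) (b n) := by
  by_contra! hmem
  have hdist : StrictAnti fun n => T.dist x (b n) := strictAnti_nat_of_succ_lt fun n =>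
    dist_right_lt_of_mem_of_notMem_halfTree hT (hab _) (hmem _) <|
      right_notMem_of_halfTree_ssubset hT.isAcyclic (hab n) (hab _) (hanti n.lt_succ_self)
  exact not_strictAnti_of_wellFoundedLT _ hdist

end HalfTree

section Path

variable {V : Type*} {T : SimpleGraph V} {p q : ℤ → V}

theorem strictAnti_halfTree_of_injective (hT : T.IsTree) (hinj : p.Injective)
    (hadj : ∀ i, T.Adj (p i) (p (i + 1))) :
    StrictAnti fun i => halfTree T (p i) (p (i + 1)) := by
  refine strictAnti_int_of_succ_lt fun i => ?_
  have hne : p i ≠ p (i + 1 + 1) := fun h => by have := hinj h; lia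
  have hleft : p i ∉ halfTree T (p (i + 1)) (p (i + 1 + 1)) := fun hmem =>
    hne (eq_of_adj_of_mem_of_notMem_halfTree hT.isAcyclic (hadj _) (hadj i) hmem
      (left_notMem_halfTree hT.isAcyclic (hadj _))).1
  have hright : p (i + 1 + 1) ∈ halfTree T (p i) (p (i + 1)) := by
    by_contra hmem
    exact hne (eq_of_adj_of_mem_of_notMem_halfTree hT.isAcyclic (hadj i) (hadj _)
      right_mem_halfTree hmem).2.symm
  exact (halfTree_subset_halfTree hT (hadj i) (hadj _) hleft hright).ssubset_of_mem_notMem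
    right_mem_halfTree (left_notMem_halfTree hT.isAcyclic (hadj _))

theorem range_subset_halfTree_or_compl {a b : V} (hq : ∀ j, T.Adj (q j) (q (j + 1)))
    (hne : ∀ j, s(q j, q (j + 1)) ≠ s(a, b)) :
    Set.range q ⊆ halfTree T a b ∨ Set.range q ⊆ (halfTree T a b)ᶜ := by
  have hstep (j : ℤ) : (T.deleteEdges {s(a, b)}).Reachable (q j) (q (j + 1)) :=
    (T.deleteEdges_adj.2 ⟨hq j, hne j⟩ : (T.deleteEdges {s(a, b)}).Adj _ _).reachable
  have hreach (j : ℤ) : (T.deleteEdges {s(a, b)}).Reachable (q 0) (q j) := by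
    induction j using Int.induction_on with
    | zero => rfl
    | succ n ih => exact ih.trans (hstep n)
    | pred n ih => exact ih.trans (by simpa using (hstep (-n - 1)).symm)
  by_cases h0 : q 0 ∈ halfTree T a b
  · exact .inl (Set.range_subset_iff.2 fun j => (hreach j).symm.trans h0)
  · exact .inr (Set.range_subset_iff.2 fun j hj => h0 ((hreach j).trans hj))

theorem exists_notMem_halfTree_of_injective (hT : T.IsTree) (hinj : p.Injective)
    (hadj : ∀ i, T.Adj (p i) (p (i + 1))) (x : V) :
    ∃ i, x ∉ halfTree T (p i) (p (i + 1)) := by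
  obtain ⟨n, hn⟩ := exists_notMem_of_strictAnti_halfTree hT
    (a := fun n : ℕ => p n) (b := fun n : ℕ => p (n + 1)) (fun n => hadj n)
    ((strictAnti_halfTree_of_injective hT hinj hadj).comp_strictMono Nat.strictMono_cast) x
  exact ⟨n, hn⟩

theorem exists_mem_halfTree_of_injective (hT : T.IsTree) (hinj : p.Injective)
    (hadj : ∀ i, T.Adj (p i) (p (i + 1))) (x : V) :
    ∃ i, x ∈ halfTree T (p i) (p (i + 1)) := by
  obtain ⟨i, hi⟩ := exists_notMem_halfTree_of_injective hT (p := fun i => p (-i))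
    (hinj.comp neg_injective) (fun i => by simpa using (hadj (-(i + 1))).symm) x
  refine ⟨-(i + 1), ?_⟩
  rw [← Set.notMem_compl_iff, halfTree_compl hT (hadj _)]
  simpa using hi

theorem exists_range_subset_halfTree_diff (hT : T.IsTree) (hinj : p.Injective)
    (hadj : ∀ i, T.Adj (p i) (p (i + 1))) (hq : ∀ j, T.Adj (q j) (q (j + 1)))
    (hne : ∀ i j, s(q j, q (j + 1)) ≠ s(p i, p (i + 1))) :
    ∃ i, Set.range q ⊆
      halfTree T (p i) (p (i + 1)) \ halfTree T (p (i + 1)) (p (i + 1 + 1)) := by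
  have hanti := (strictAnti_halfTree_of_injective hT hinj hadj).antitone
  obtain ⟨m, hm⟩ := exists_notMem_halfTree_of_injective hT hinj hadj (q 0)
  obtain ⟨i, hi, hmax⟩ := Int.exists_greatest_of_bdd
    ⟨m, fun z hz => le_of_not_ge fun hmz => hm (hanti hmz hz)⟩
    (exists_mem_halfTree_of_injective hT hinj hadj (q 0))
  have hi' : q 0 ∉ halfTree T (p (i + 1)) (p (i + 1 + 1)) := fun h => by
    have := hmax _ h
    lia
  exact ⟨i, Set.subset_sdiff.2
    ⟨(range_subset_halfTree_or_compl hq (hne i)).resolve_right fun h => h ⟨0, rfl⟩ hi,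
      Set.subset_compl_iff_disjoint_right.1 <|
        (range_subset_halfTree_or_compl hq (hne (i + 1))).resolve_left fun h => hi' (h ⟨0, rfl⟩)⟩⟩

end Path

section Action

/-- `G` acts on the graph `T` by automorphisms. One implication is enough, as `G` is a group. -/
def ActsByAut (G : Type*) {V : Type*} [Group G] [MulAction G V] (T : SimpleGraph V) : Prop :=
  ∀ (t : G) ⦃u w : V⦄, T.Adj u w → T.Adj (t • u) (t • w)

variable {G V : Type*} [Group G] [MulAction G V] {T : SimpleGraph V} {a b : V}

theorem ActsByAut.smul_halfTree (hG : ActsByAut G T) (t : G) (a b : V) :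
    t • halfTree T a b = halfTree T (t • a) (t • b) := by
  have hsub (t : G) (a b : V) : t • halfTree T a b ⊆ halfTree T (t • a) (t • b) := by
    rintro _ ⟨v, hv, rfl⟩
    let f : T.deleteEdges {s(a, b)} →g T.deleteEdges {s(t • a, t • b)} :=
      ⟨(t • ·), fun {u w} huw => by
        rw [SimpleGraph.deleteEdges_adj] at huw ⊢
        exact ⟨hG t huw.1, by simpa using huw.2⟩⟩
    exact SimpleGraph.Reachable.map f hv
  refine (hsub t a b).antisymm ?_
  simpa [Set.subset_smul_set_iff] using hsub t⁻¹ (t • a) (t • b)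

theorem ActsByAut.exists_inv_pow_smul_notMem (hT : T.IsTree) (hG : ActsByAut G T)
    (hab : T.Adj a b) {t : G} (ht : t • halfTree T a b ⊂ halfTree T a b) (x : V) :
    ∃ n : ℕ, t⁻¹ ^ n • x ∉ halfTree T a b := by
  have hanti : StrictAnti fun n : ℕ => halfTree T (t ^ n • a) (t ^ n • b) := by
    refine strictAnti_nat_of_succ_lt fun n => ?_
    simp only [← hG.smul_halfTree, pow_succ, mul_smul]
    exact (MulAction.injective (t ^ n)).image_strictMono ht
  obtain ⟨n, hn⟩ := exists_notMem_of_strictAnti_halfTree hT (fun n => hG (t ^ n) hab) hanti x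
  exact ⟨n, by rwa [← hG.smul_halfTree, Set.mem_smul_set_iff_inv_smul_mem, ← inv_pow] at hn⟩

theorem ActsByAut.skewers_halfTree (hT : T.IsTree) (hG : ActsByAut G T) (hab : T.Adj a b) {t : G}
    (ht : t • halfTree T a b ⊂ halfTree T a b) : Skewers t (halfTree T a b) where
  smul_subset := ht.subset
  exists_pow_smul_mem x := by
    have ht' : t⁻¹ • halfTree T b a ⊂ halfTree T b a := by
      rwa [← halfTree_compl hT hab, smul_compl_ssubset_compl_iff]
    obtain ⟨n, hn⟩ := hG.exists_inv_pow_smul_notMem hT hab.symm ht' x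
    exact ⟨n, by rwa [← halfTree_compl hT hab, Set.notMem_compl_iff, inv_inv] at hn⟩
  exists_inv_pow_smul_notMem := hG.exists_inv_pow_smul_notMem hT hab ht

theorem ActsByAut.smul_halfTree_axis (hG : ActsByAut G T) {t : G} {p : ℤ → V} {l : ℕ}
    (hp : IsTransAxis T (MulAction.toPerm t) p l) (i : ℤ) :
    t • halfTree T (p i) (p (i + 1)) = halfTree T (p (i + l)) (p (i + l + 1)) := by
  have htrans : ∀ j, t • p j = p (j + l) := hp.2.2.2
  rw [hG.smul_halfTree, htrans, htrans, add_right_comm]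

theorem ActsByAut.smul_halfTree_axis_subset (hT : T.IsTree) (hG : ActsByAut G T) {t : G}
    {p : ℤ → V} {l : ℕ} (hp : IsTransAxis T (MulAction.toPerm t) p l) (i : ℤ) :
    t • halfTree T (p i) (p (i + 1)) ⊆ halfTree T (p (i + 1)) (p (i + 1 + 1)) := by
  have hl := hp.2.2.1
  rw [hG.smul_halfTree_axis hp]
  exact (strictAnti_halfTree_of_injective hT hp.1 hp.2.1).antitone (by lia)

theorem ActsByAut.smul_halfTree_axis_ssubset (hT : T.IsTree) (hG : ActsByAut G T) {t : G}
    {p : ℤ → V} {l : ℕ} (hp : IsTransAxis T (MulAction.toPerm t) p l) (i : ℤ) :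
    t • halfTree T (p i) (p (i + 1)) ⊂ halfTree T (p i) (p (i + 1)) :=
  (hG.smul_halfTree_axis_subset hT hp i).trans_ssubset
    (strictAnti_halfTree_of_injective hT hp.1 hp.2.1 (lt_add_one i))

theorem ActsByAut.exists_halfTree_ssubset (hT : T.IsTree) (hG : ActsByAut G T) {g h : G}
    {pg ph : ℤ → V} {lg lh : ℕ} (hpg : IsTransAxis T (MulAction.toPerm g) pg lg)
    (hph : IsTransAxis T (MulAction.toPerm h) ph lh) (hcomp : TransCompat pg ph) :
    ∃ a b, T.Adj a b ∧ g • halfTree T a b ⊂ halfTree T a b ∧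
      (h * g) • halfTree T a b ⊂ halfTree T a b := by
  have hgss := hG.smul_halfTree_axis_ssubset hT hpg
  by_cases hcommon : ∃ i j, pg i = ph j ∧ pg (i + 1) = ph (j + 1)
  · obtain ⟨i, j, hi, hi'⟩ := hcommon
    have hhss := hG.smul_halfTree_axis_ssubset hT hph j
    rw [← hi, ← hi'] at hhss
    refine ⟨_, _, hpg.2.1 i, hgss i, ?_⟩
    rw [mul_smul]
    exact (Set.smul_set_mono (hgss i).subset).trans_ssubset hhss
  have hne (i j : ℤ) : s(ph j, ph (j + 1)) ≠ s(pg i, pg (i + 1)) := fun hedge => by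
    rcases Sym2.eq_iff.1 hedge with ⟨hj, hj'⟩ | ⟨hj, hj'⟩
    · exact hcommon ⟨i, j, hj.symm, hj'.symm⟩
    · have := hcomp i (i + 1) (j + 1) j hj'.symm hj.symm
      lia
  obtain ⟨i, hi⟩ := exists_range_subset_halfTree_diff hT hpg.1 hpg.2.1 hph.2.1 hne
  obtain ⟨j, hj⟩ := exists_range_subset_halfTree_diff hT hph.1 hph.2.1 hpg.2.1
    fun i j => (hne j i).symm
  have hsub_gh : halfTree T (pg (i + 1)) (pg (i + 1 + 1)) ⊆ halfTree T (ph j) (ph (j + 1)) :=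
    halfTree_subset_halfTree hT (hph.2.1 _) (hpg.2.1 _) (hi ⟨_, rfl⟩).2 (hj ⟨_, rfl⟩).1
  have hssub_hg : halfTree T (ph (j + 1)) (ph (j + 1 + 1)) ⊂ halfTree T (pg i) (pg (i + 1)) :=
    (halfTree_subset_halfTree hT (hpg.2.1 _) (hph.2.1 _) (hj ⟨_, rfl⟩).2
      (hi ⟨_, rfl⟩).1).ssubset_of_mem_notMem right_mem_halfTree (hj ⟨_, rfl⟩).2
  refine ⟨_, _, hpg.2.1 i, hgss i, ?_⟩
  calc (h * g) • halfTree T (pg i) (pg (i + 1))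
    _ = h • g • halfTree T (pg i) (pg (i + 1)) := mul_smul _ _ _
    _ ⊆ h • halfTree T (ph j) (ph (j + 1)) :=
      Set.smul_set_mono ((hG.smul_halfTree_axis_subset hT hpg i).trans hsub_gh)
    _ ⊆ halfTree T (ph (j + 1)) (ph (j + 1 + 1)) := hG.smul_halfTree_axis_subset hT hph j
    _ ⊂ halfTree T (pg i) (pg (i + 1)) := hssub_hg

theorem ActsByAut.isCocycle_of_coloring {Ω : Type*} (hG : ActsByAut G T) {c : V → V → Ω}
    (hc : ∀ v, Set.SurjOn (c v) (T.neighborSet v) Set.univ) {σ : G → V → Equiv.Perm Ω}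
    (hσ : ∀ t v u, T.Adj v u → σ t v (c v u) = c (t • v) (t • u)) : IsCocycle σ := by
  intro s t v
  ext x
  obtain ⟨u, hu : T.Adj v u, rfl⟩ := hc v (Set.mem_univ x)
  rw [Equiv.Perm.mul_apply, hσ _ _ _ hu, hσ _ _ _ hu, hσ _ _ _ (hG t hu), mul_smul, mul_smul]

end Action

/-- The automorphisms of `T`, as a subgroup of the permutations of its vertices. In contrast to
`T ≃g T`, its powers are by definition those of `Equiv.Perm V`. -/
def autSubgroup {V : Type*} (T : SimpleGraph V) : Subgroup (Equiv.Perm V) where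
  carrier := {t | ∀ u w, T.Adj u w ↔ T.Adj (t u) (t w)}
  one_mem' _ _ := Iff.rfl
  mul_mem' hs ht u w := (ht u w).trans (hs _ _)
  inv_mem' {t} ht u w := by simpa using (ht (t⁻¹ u) (t⁻¹ w)).symm

theorem actsByAut_autSubgroup {V : Type*} (T : SimpleGraph V) : ActsByAut (autSubgroup T) T :=
  fun t u w => (t.2 u w).1

theorem weaklyAsymptotic_mul_general {G V K : Type*} [Group G] [MulAction G V] [Group K]
    {T : SimpleGraph V} (hT : T.IsTree) (hG : ActsByAut G T)
    {σ : G → V → K} (hσ : IsCocycle σ) {F : Subgroup K} {g h : G}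
    (hgfin : {v | σ g v ∉ F}.Finite) {pg ph : ℤ → V} {lg lh : ℕ}
    (hpg : IsTransAxis T (MulAction.toPerm g) pg lg)
    (hph : IsTransAxis T (MulAction.toPerm h) ph lh) (hcomp : TransCompat pg ph)
    {Λ : V → K ⧸ F} (hΛg : IsAsymptoticCoset σ F g Λ) (hΛh : IsAsymptoticCoset σ F h Λ) :
    IsAsymptoticCoset σ F (h * g) Λ := by
  obtain ⟨a, b, hab, hg, hhg⟩ := hG.exists_halfTree_ssubset hT hpg hph hcomp
  exact hσ.isAsymptoticCoset_mul_of_skewers hgfin (hG.skewers_halfTree hT hab hg)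
    (hG.skewers_halfTree hT hab hhg) hΛg hΛh

/-- Suppose `g, h ∈ G(F,F')` are hyperbolic, translation compatible and
weakly asymptotic (`λ_g = λ_h` pointwise, where `λ_g(u)` is the eventual value of the
coset `σ(gⁿ, g⁻ⁿ(u))·F ∈ Sym(Ω)/F`).  Then `h` and `h g` are weakly asymptotic:
`λ_{hg}(u) = λ_h(u)` for every vertex `u`. -/
theorem weaklyAsymptotic_mul {V Ω : Type*} (T : SimpleGraph V) (hT : T.IsTree)
    (c : V → V → Ω)
    (hsym : ∀ u v : V, T.Adj u v → c u v = c v u)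
    (hbij : ∀ v : V, Set.BijOn (fun u => c v u) (T.neighborSet v) Set.univ)
    (σ : Equiv.Perm V → V → Equiv.Perm Ω)
    (hσ : ∀ g : Equiv.Perm V, (∀ u w : V, T.Adj u w ↔ T.Adj (g u) (g w)) →
      ∀ v u : V, T.Adj v u → σ g v (c v u) = c (g v) (g u))
    (F F' : Subgroup (Equiv.Perm Ω)) (hFF' : F ≤ F')
    (g h : Equiv.Perm V)
    (hg : ∀ u w : V, T.Adj u w ↔ T.Adj (g u) (g w))
    (hh : ∀ u w : V, T.Adj u w ↔ T.Adj (h u) (h w))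
    (hgF' : ∀ v : V, σ g v ∈ F') (hhF' : ∀ v : V, σ h v ∈ F')
    (hgfin : {v : V | σ g v ∉ F}.Finite) (hhfin : {v : V | σ h v ∉ F}.Finite)
    (pg ph : ℤ → V) (lg lh : ℕ)
    (hpg : IsTransAxis T g pg lg) (hph : IsTransAxis T h ph lh)
    (hcomp : TransCompat pg ph)
    (Λg Λh Λhg : V → Equiv.Perm Ω ⧸ F)
    (hΛg : ∀ u : V, ∃ N : ℕ, ∀ n : ℕ, N ≤ n →
      (QuotientGroup.mk (σ (g ^ n) ((g⁻¹ ^ n) u)) : Equiv.Perm Ω ⧸ F) = Λg u)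
    (hΛh : ∀ u : V, ∃ N : ℕ, ∀ n : ℕ, N ≤ n →
      (QuotientGroup.mk (σ (h ^ n) ((h⁻¹ ^ n) u)) : Equiv.Perm Ω ⧸ F) = Λh u)
    (hΛhg : ∀ u : V, ∃ N : ℕ, ∀ n : ℕ, N ≤ n →
      (QuotientGroup.mk (σ ((h * g) ^ n) (((h * g)⁻¹ ^ n) u)) : Equiv.Perm Ω ⧸ F)
        = Λhg u)
    (hweak : ∀ u : V, Λg u = Λh u) :
    ∀ u : V, Λhg u = Λh u := by
  have hG := actsByAut_autSubgroup T
  let σ' (t : autSubgroup T) (v : V) : Equiv.Perm Ω := σ t v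
  let g' : autSubgroup T := ⟨g, hg⟩
  let h' : autSubgroup T := ⟨h, hh⟩
  have hσ' : IsCocycle σ' :=
    hG.isCocycle_of_coloring (fun v => (hbij v).surjOn) fun t => hσ t t.2
  have hΛg' : IsAsymptoticCoset σ' F g' Λh := fun u => eventually_atTop.2 (hweak u ▸ hΛg u)
  have hΛh' : IsAsymptoticCoset σ' F h' Λh := fun u => eventually_atTop.2 (hΛh u)
  have hΛhg' : IsAsymptoticCoset σ' F (h' * g') Λhg := fun u => eventually_atTop.2 (hΛhg u)
  exact congrFun <| hΛhg'.unique <|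
    weaklyAsymptotic_mul_general (g := g') (h := h') hT hG hσ' hgfin hpg hph hcomp hΛg' hΛh'
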